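/- For every ε > 0 there exists N such that for every finite connected simple graph G on n ≥ N vertices and every pair of starting vertices u (cop) and v (robber), there is a cop strategy for the cop-and-drunk game on G whose expected capture time is at most (1 + ε)·n. (Equivalently: a suitable cop captures the drunk robber in expected time n + o(n), uniformly over all connected n-vertex graphs and starting positions.) -/

import Mathlib

open scoped Classical ENNReal

/-! ## The cop-and-drunk game

A cop starts at `u`, a robber at `v`.  In each move the cop steps to an adjacent vertex
(seeing everything), then the robber steps to a uniformly random adjacent vertex.
A cop strategy is a function assigning to each finite history of play (equivalently, to the
finite sequence of robber positions observed so far, which together with the strategy itself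
determines the whole history) the cop's next vertex.  Capture occurs the first time the two
players occupy the same vertex, whether after the cop's step or after the robber's step, and
the capture time is the index of that move.  The expected capture time is computed as
`∑_{k≥0} P(T > k)` in `ℝ≥0∞`, where the probability of a robber trajectory is the product of
the transition weights `1/deg` of the simple random walk (so non-walk trajectories get
weight `0`). -/

/-- The cop's position after move `k`, given strategy `σ`, starting vertex `u`, and the
robber's trajectory `r` (the strategy sees the history `r 0, …, r (k-1)`). -/
def copPos {V : Type} (σ : List V → V) (u : V) (r : ℕ → V) : ℕ → V
  | 0 => u
  | k + 1 => σ (List.ofFn fun i : Fin (k + 1) => r i)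

/-- A strategy is valid for `G` if the cop always moves from her current vertex to an
adjacent vertex. -/
def ValidStrategy {V : Type} (G : SimpleGraph V) (σ : List V → V) (u : V) : Prop :=
  ∀ (r : ℕ → V) (k : ℕ), G.Adj (copPos σ u r k) (copPos σ u r (k + 1))

/-- The robber following trajectory `r` has been captured by the end of move `k`
(including capture at time `0` in case the two players start on the same vertex):
at some move `j ≤ k`, either the cop stepped onto the robber's current vertex, or the
robber stepped onto the cop's vertex. -/
def CapturedBy {V : Type} (σ : List V → V) (u : V) (r : ℕ → V) (k : ℕ) : Prop :=
  r 0 = u ∨ ∃ j, 1 ≤ j ∧ j ≤ k ∧ (copPos σ u r j = r (j - 1) ∨ copPos σ u r j = r j)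

/-- Probability weight of the first `k` steps of the trajectory `r` for the simple random
walk on `G`: the product of `1/deg` over the steps, and `0` if some step is not an edge. -/
noncomputable def pathWt {V : Type} [Fintype V] (G : SimpleGraph V) (r : ℕ → V) (k : ℕ) :
    ℝ≥0∞ :=
  ∏ i ∈ Finset.range k, if G.Adj (r i) (r (i + 1)) then ((G.degree (r i) : ℝ≥0∞))⁻¹ else 0

/-- Extend a finite trajectory to an infinite one (constant after time `k`). -/
def pad {V : Type} (k : ℕ) (q : Fin (k + 1) → V) : ℕ → V :=
  fun i => q ⟨min i k, Nat.lt_succ_of_le (Nat.min_le_right i k)⟩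

/-- The probability that the robber, starting at `v` and performing a simple random walk on
`G`, survives (is not yet captured) through the end of move `k`, against the cop playing
strategy `σ` from `u`. -/
noncomputable def survival {V : Type} [Fintype V] (G : SimpleGraph V) (σ : List V → V)
    (u v : V) (k : ℕ) : ℝ≥0∞ :=
  ∑ q : Fin (k + 1) → V,
    if q 0 = v ∧ ¬ CapturedBy σ u (pad k q) k then pathWt G (pad k q) k else 0

/-- The expected capture time `E[T] = ∑_{k ≥ 0} P(T > k)` of the cop-and-drunk game on `G`,
with the cop starting at `u` playing strategy `σ` and the robber starting at `v`. -/
noncomputable def expCaptureTime {V : Type} [Fintype V] (G : SimpleGraph V) (σ : List V → V)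
    (u v : V) : ℝ≥0∞ :=
  ∑' k : ℕ, survival G σ u v k

/-! The cop plays optimally with respect to the limit of the values of the games with finitely many
moves, a solution of Bellman's equation; so it suffices to bound these values uniformly.

Far from the robber, at distance `d`, the cop walks in `d` moves to the vertex where he started. By
the Varopoulos–Carne bound a random walk of `d` steps is unlikely to end at distance more than `e d`
from its start, so the cop then starts afresh at distance at most `e d`; the walks form a geometric
series with total length about `(1 + e) d`, until the distance is at most `n ^ (1 / 8)`.

Near the robber, decreasing the distance by one costs `O(n ^ (3 / 4))`. If his vertex has degree at
most `n ^ (3 / 4)`, his next step goes towards the cop with probability at least `n ^ (-3 / 4)`. If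
the degree is larger, a Cauchy–Schwarz argument shows that after three steps he is, with probability
at least `n ^ (-3 / 4)`, at a neighbour of his vertex, while the cop has come three steps closer.

At distance at most two, the cop can step next to the robber or onto him in every move, and in the
former case he steps onto her with probability at least `1 / Δ`, where `Δ` is the maximal degree; so
`Δ` more moves suffice in expectation. Finally, a neighbourhood meets at most three consecutive
distance levels, so the diameter plus `Δ` is at most `n + 2`. -/

namespace CopDrunk

section Chebyshev

open Polynomial

theorem one_sub_chebyshev_T_sq (R : Type*) [CommRing R] (n : ℤ) :
    1 - Chebyshev.T R n ^ 2 = (1 - X ^ 2) * Chebyshev.U R (n - 1) ^ 2 := by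
  have hU := congrArg (fun p => p.comp (2 * X)) (Chebyshev.S_sq_add_S_sq R (n - 1))
  simp only [sub_add_cancel, sub_comp, add_comp, mul_comp, pow_comp, X_comp, one_comp,
    Chebyshev.S_comp_two_mul_X] at hU
  rw [Chebyshev.T_eq_U_sub_X_mul_U]
  linear_combination -hU

theorem isAdjointPair_aeval {R M : Type*} [CommRing R] [AddCommGroup M] [Module R M]
    {B : LinearMap.BilinForm R M} {T : Module.End R M} (hT : LinearMap.IsAdjointPair B B T T)
    (p : R[X]) : LinearMap.IsAdjointPair B B (aeval T p) (aeval T p) := by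
  induction p using Polynomial.induction_on with
  | C a =>
    intro f g
    simp only [aeval_C, Module.algebraMap_end_apply, map_smul, LinearMap.smul_apply]
  | add p q hp hq =>
    rw [map_add]
    exact hp.add hq
  | monomial n a ih =>
    have hcomm : T * aeval T (C a * X ^ n) = aeval T (C a * X ^ n) * T := by
      have hX := congrArg (aeval T) (X_mul (p := C a * X ^ n))
      rwa [map_mul, map_mul _ (C a * X ^ n) X, aeval_X] at hX
    have hmul := ih.mul hT
    rw [hcomm] at hmul
    rwa [pow_succ, ← mul_assoc, map_mul, aeval_X]

/-- Evaluate `T_n² + U_{n-1}² = 1 + X² U_{n-1}²` at the contraction `T`. -/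
theorem chebyshev_T_apply_le {E : Type*} [AddCommGroup E] [Module ℝ E]
    {B : LinearMap.BilinForm ℝ E} {T : Module.End ℝ E} (hT : LinearMap.IsAdjointPair B B T T)
    (hcontr : ∀ f, B (T f) (T f) ≤ B f f) (n : ℤ) (f : E) :
    B (aeval T (Chebyshev.T ℝ n) f) (aeval T (Chebyshev.T ℝ n) f) ≤ B f f := by
  have hsq : ∀ p : ℝ[X], B (aeval T p f) (aeval T p f) = B f (aeval T (p ^ 2) f) := fun p => by
    rw [isAdjointPair_aeval hT, sq, map_mul, Module.End.mul_apply]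
  have hpell : Chebyshev.T ℝ n ^ 2 + Chebyshev.U ℝ (n - 1) ^ 2
      = 1 + (X * Chebyshev.U ℝ (n - 1)) ^ 2 := by
    linear_combination -one_sub_chebyshev_T_sq ℝ n
  have hform := congrArg (fun p => B f (aeval T p f)) hpell
  simp only [map_add, LinearMap.add_apply, map_one, Module.End.one_apply, ← hsq] at hform
  have hU := hcontr (aeval T (Chebyshev.U ℝ (n - 1)) f)
  rw [map_mul, aeval_X, Module.End.mul_apply] at hform
  linarith

theorem abs_map_X_pow_mul_chebyshev_T_le (φ : ℝ[X] →ₗ[ℝ] ℝ) (C s : ℝ)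
    (hφ : ∀ m : ℤ, |φ (Chebyshev.T ℝ m)| ≤ C * Real.cosh (s * m)) (t : ℕ) (m : ℤ) :
    |φ (X ^ t * Chebyshev.T ℝ m)| ≤ C * Real.cosh s ^ t * Real.cosh (s * m) := by
  induction t generalizing m with
  | zero => simpa using hφ m
  | succ t ih =>
    have hrec : (2 : ℝ) • (X ^ (t + 1) * Chebyshev.T ℝ m)
        = X ^ t * Chebyshev.T ℝ (m + 1) + X ^ t * Chebyshev.T ℝ (m - 1) := by
      rw [Chebyshev.T_add_one, two_smul]
      ring
    have hcosh : Real.cosh (s * (m + 1 : ℤ)) + Real.cosh (s * (m - 1 : ℤ))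
        = 2 * (Real.cosh s * Real.cosh (s * m)) := by
      push_cast
      rw [mul_add, mul_sub, mul_one, Real.cosh_add, Real.cosh_sub]
      ring
    have hsum : 2 * |φ (X ^ (t + 1) * Chebyshev.T ℝ m)|
        ≤ 2 * (C * Real.cosh s ^ (t + 1) * Real.cosh (s * m)) :=
      calc 2 * |φ (X ^ (t + 1) * Chebyshev.T ℝ m)|
          = |φ (X ^ t * Chebyshev.T ℝ (m + 1)) + φ (X ^ t * Chebyshev.T ℝ (m - 1))| := by
            rw [← map_add, ← hrec, map_smul, smul_eq_mul, abs_mul, abs_two]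
        _ ≤ |φ (X ^ t * Chebyshev.T ℝ (m + 1))| + |φ (X ^ t * Chebyshev.T ℝ (m - 1))| :=
            abs_add_le _ _
        _ ≤ C * Real.cosh s ^ t * Real.cosh (s * (m + 1 : ℤ))
            + C * Real.cosh s ^ t * Real.cosh (s * (m - 1 : ℤ)) := add_le_add (ih _) (ih _)
        _ = 2 * (C * Real.cosh s ^ (t + 1) * Real.cosh (s * m)) := by
            rw [← mul_add, hcosh, pow_succ]
            ring
    linarith

end Chebyshev

section Distance

variable {V : Type*} {G : SimpleGraph V}

theorem exists_adj_dist_add_one_eq {c x : V} (h : G.dist c x ≠ 0) :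
    ∃ c', G.Adj c c' ∧ G.dist c' x + 1 = G.dist c x := by
  obtain ⟨p, hp⟩ := G.exists_walk_of_dist_ne_zero h
  cases p with
  | nil => simp at h
  | @cons _ c' _ hadj q =>
    refine ⟨c', hadj, ?_⟩
    have hq := SimpleGraph.dist_le q
    have hdist := hadj.diff_dist_adj (u := x)
    simp only [SimpleGraph.Walk.length_cons] at hp
    simp only [G.dist_comm (u := x)] at hdist
    omega

theorem exists_dist_eq_of_le {u v : V} {i : ℕ} (hi : i ≤ G.dist u v) : ∃ w, G.dist w v = i := by
  induction hi using Nat.decreasingInduction with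
  | self => exact ⟨u, rfl⟩
  | of_succ i _ ih =>
    obtain ⟨w, hw⟩ := ih
    obtain ⟨w', -, hw'⟩ := exists_adj_dist_add_one_eq (hw.trans_ne i.succ_ne_zero)
    exact ⟨w', by omega⟩

theorem dist_add_degree_le [Fintype V] (u v x : V) :
    G.dist u v + G.degree x ≤ Fintype.card V + 2 := by
  have hlevels : Finset.range (G.dist u v + 1) ⊆
      (G.neighborFinset x)ᶜ.image (G.dist v) ∪
        {G.dist v x - 1, G.dist v x, G.dist v x + 1} := by
    intro i hi
    obtain ⟨w, hw⟩ := exists_dist_eq_of_le (Finset.mem_range_succ_iff.1 hi)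
    rw [G.dist_comm] at hw
    by_cases hadj : G.Adj x w
    · have := hadj.diff_dist_adj (u := v)
      simp only [Finset.mem_union, Finset.mem_insert, Finset.mem_singleton]
      omega
    · exact Finset.mem_union_left _ (Finset.mem_image.2 ⟨w, by simpa using hadj, hw⟩)
  have hcard := (Finset.card_le_card hlevels).trans (Finset.card_union_le _ _)
  have himage := (G.neighborFinset x)ᶜ.card_image_le (f := G.dist v)
  have hthree : _ ≤ 3 := Finset.card_le_three
    (a := G.dist v x - 1) (b := G.dist v x) (c := G.dist v x + 1)
  rw [Finset.card_compl, SimpleGraph.card_neighborFinset_eq_degree] at himage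
  rw [Finset.card_range] at hcard
  have := G.degree_lt_card_verts x
  omega

theorem dist_add_maxDegree_le [Fintype V] (u v : V) :
    G.dist u v + G.maxDegree ≤ Fintype.card V + 2 := by
  have : Nonempty V := ⟨u⟩
  obtain ⟨x, hx⟩ := G.exists_maximal_degree_vertex
  exact hx ▸ dist_add_degree_le u v x

end Distance

section Walk

variable {V : Type*} [Fintype V] (G : SimpleGraph V)

/-- The transition operator of the simple random walk on `G`: the value of `walkOperator G f` at
`v` is the average of `f` over the neighbours of `v`, and `0` if `v` is isolated. -/
noncomputable def walkOperator : Module.End ℝ (V → ℝ) where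
  toFun f v := (∑ w ∈ G.neighborFinset v, f w) / G.degree v
  map_add' f g := by
    ext v
    simp only [Pi.add_apply, Finset.sum_add_distrib, add_div]
  map_smul' c f := by
    ext v
    simp only [Pi.smul_apply, smul_eq_mul, RingHom.id_apply, ← Finset.mul_sum, mul_div_assoc]

/-- The probability that the simple random walk on `G` started at `x` is in `s` at time `t`. -/
noncomputable def walkProb (t : ℕ) (x : V) (s : Set V) : ℝ :=
  (walkOperator G ^ t) (s.indicator 1) x

theorem walkOperator_apply (f : V → ℝ) (v : V) :
    walkOperator G f v = (∑ w ∈ G.neighborFinset v, f w) / G.degree v := rfl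

variable {G}

theorem walkOperator_le_of_adj {f g : V → ℝ} {v : V} (h : ∀ w, G.Adj v w → f w ≤ g w) :
    walkOperator G f v ≤ walkOperator G g v := by
  simp only [walkOperator_apply]
  gcongr with w hw
  exact h w ((G.mem_neighborFinset v w).1 hw)

theorem walkOperator_nonneg {f : V → ℝ} (h : 0 ≤ f) : 0 ≤ walkOperator G f := by
  intro v
  rw [← map_zero (walkOperator G)]
  exact walkOperator_le_of_adj fun w _ => h w

theorem walkOperator_const (hd : ∀ v, 0 < G.degree v) (c : ℝ) :
    walkOperator G (fun _ => c) = fun _ => c := by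
  ext v
  have := hd v
  rw [walkOperator_apply, Finset.sum_const, SimpleGraph.card_neighborFinset_eq_degree,
    nsmul_eq_mul, mul_div_cancel_left₀ _ (by positivity)]

theorem walkOperator_pow_const (hd : ∀ v, 0 < G.degree v) (t : ℕ) (c : ℝ) :
    (walkOperator G ^ t) (fun _ => c) = fun _ => c := by
  rw [Module.End.pow_apply]
  exact Function.iterate_fixed (walkOperator_const hd c) t

theorem walkOperator_pow_le_of_dist_le {f g : V → ℝ} {t : ℕ} {x : V}
    (h : ∀ w, G.dist x w ≤ t → f w ≤ g w) :
    (walkOperator G ^ t) f x ≤ (walkOperator G ^ t) g x := by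
  induction t generalizing x with
  | zero => exact h x (by simp)
  | succ t ih =>
    rw [pow_succ']
    refine walkOperator_le_of_adj fun w hw => ih fun z hz => h z ?_
    have := hw.diff_dist_adj (u := z)
    simp only [G.dist_comm (u := z)] at this
    omega

theorem walkOperator_pow_eq_zero_of_dist_le {f : V → ℝ} {t : ℕ} {x : V}
    (h : ∀ w, G.dist x w ≤ t → f w = 0) : (walkOperator G ^ t) f x = 0 := by
  have hzero : (walkOperator G ^ t) 0 x = 0 := by rw [map_zero, Pi.zero_apply]
  rw [← hzero]
  exact le_antisymm (walkOperator_pow_le_of_dist_le fun w hw => (h w hw).le)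
    (walkOperator_pow_le_of_dist_le fun w hw => (h w hw).ge)

theorem walkOperator_pow_le_add_mul_walkProb (hd : ∀ v, 0 < G.degree v) {f : V → ℝ} {t : ℕ}
    {x : V} {s : Set V} {M δ : ℝ} (hs : ∀ w ∈ s, G.dist x w ≤ t → f w ≤ M + δ)
    (hsc : ∀ w ∉ s, G.dist x w ≤ t → f w ≤ M) :
    (walkOperator G ^ t) f x ≤ M + δ * walkProb G t x s := by
  calc (walkOperator G ^ t) f x
      ≤ (walkOperator G ^ t) ((fun _ => M) + δ • s.indicator 1) x := by
        refine walkOperator_pow_le_of_dist_le fun w hw => ?_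
        by_cases hws : w ∈ s
        · simpa [hws] using hs w hws hw
        · simpa [hws] using hsc w hws hw
    _ = M + δ * walkProb G t x s := by
        rw [map_add, map_smul, walkOperator_pow_const hd]
        rfl

theorem walkProb_mono {t : ℕ} {x : V} {s s' : Set V} (h : ∀ w ∈ s, G.dist x w ≤ t → w ∈ s') :
    walkProb G t x s ≤ walkProb G t x s' := by
  refine walkOperator_pow_le_of_dist_le fun w hw => ?_
  by_cases hws : w ∈ s
  · simp [hws, h w hws hw]
  · rw [Set.indicator_of_notMem hws]
    exact Set.indicator_nonneg (f := (1 : V → ℝ)) (fun _ _ => zero_le_one) w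

theorem walkProb_nonneg {t : ℕ} {x : V} {s : Set V} : 0 ≤ walkProb G t x s := by
  have hzero : (walkOperator G ^ t) 0 x = 0 := by rw [map_zero, Pi.zero_apply]
  rw [← hzero]
  exact walkOperator_pow_le_of_dist_le fun w _ =>
    Set.indicator_nonneg (f := (1 : V → ℝ)) (fun _ _ => zero_le_one) w

theorem walkProb_one_singleton {x y : V} (h : G.Adj x y) :
    walkProb G 1 x {y} = (G.degree x : ℝ)⁻¹ := by
  simp [walkProb, walkOperator_apply, h]

theorem sum_sum_neighborFinset_comm (F : V → V → ℝ) :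
    ∑ v, ∑ w ∈ G.neighborFinset v, F v w = ∑ v, ∑ w ∈ G.neighborFinset v, F w v :=
  Finset.sum_comm' fun v w => by simp [G.adj_comm v w]

theorem degree_mul_walkOperator (f : V → ℝ) (v : V) :
    G.degree v * walkOperator G f v = ∑ w ∈ G.neighborFinset v, f w := by
  refine mul_div_cancel_of_imp' fun hv => ?_
  rw [Nat.cast_eq_zero, ← SimpleGraph.card_neighborFinset_eq_degree, Finset.card_eq_zero] at hv
  rw [hv, Finset.sum_empty]

variable (G) in
/-- The inner product of functions on the vertices weighted by the degrees; the simple random walk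
is reversible with respect to it. -/
noncomputable def degreeForm : LinearMap.BilinForm ℝ (V → ℝ) :=
  Matrix.toBilin' (G.degMatrix ℝ)

theorem degreeForm_apply (f g : V → ℝ) :
    degreeForm G f g = ∑ v, G.degree v * f v * g v := by
  simp only [degreeForm, SimpleGraph.degMatrix, Matrix.toBilin'_apply', Matrix.mulVec_diagonal,
    dotProduct]
  exact Finset.sum_congr rfl fun v _ => by ring

theorem isAdjointPair_degreeForm_walkOperator :
    LinearMap.IsAdjointPair (degreeForm G) (degreeForm G) (walkOperator G) (walkOperator G) := by
  intro f g
  calc degreeForm G (walkOperator G f) g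
      = ∑ v, ∑ w ∈ G.neighborFinset v, f w * g v := by
        simp only [degreeForm_apply, degree_mul_walkOperator, Finset.sum_mul]
    _ = ∑ v, ∑ w ∈ G.neighborFinset v, f v * g w :=
        sum_sum_neighborFinset_comm fun v w => f w * g v
    _ = degreeForm G f (walkOperator G g) := by
        rw [degreeForm_apply]
        refine Finset.sum_congr rfl fun v _ => ?_
        rw [mul_right_comm, degree_mul_walkOperator, mul_comm, Finset.mul_sum]

theorem degreeForm_walkOperator_le (f : V → ℝ) :
    degreeForm G (walkOperator G f) (walkOperator G f) ≤ degreeForm G f f := by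
  have hlocal : ∀ v, G.degree v * walkOperator G f v * walkOperator G f v
      ≤ ∑ w ∈ G.neighborFinset v, f w ^ 2 := fun v => by
    have hjensen := Finset.sq_sum_div_le_sum_sq_div (G.neighborFinset v) f
      (g := fun _ => (1 : ℝ)) fun _ _ => one_pos
    rw [Finset.sum_const, SimpleGraph.card_neighborFinset_eq_degree, nsmul_one] at hjensen
    rw [degree_mul_walkOperator, walkOperator_apply, ← mul_div_assoc, ← sq]
    simpa only [div_one] using hjensen
  calc degreeForm G (walkOperator G f) (walkOperator G f)
      ≤ ∑ v, ∑ w ∈ G.neighborFinset v, f w ^ 2 := by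
        rw [degreeForm_apply]
        exact Finset.sum_le_sum fun v _ => hlocal v
    _ = ∑ v, ∑ _w ∈ G.neighborFinset v, f v ^ 2 := sum_sum_neighborFinset_comm fun _ w => f w ^ 2
    _ = degreeForm G f f := by
        simp only [degreeForm_apply, Finset.sum_const, SimpleGraph.card_neighborFinset_eq_degree,
          nsmul_eq_mul, sq, mul_assoc]

theorem abs_chebyshev_T_walkOperator_le {h : V → ℝ} (hh : ∀ v, |h v| ≤ 1) {x : V}
    (hx : 0 < G.degree x) (m : ℤ) :
    |Polynomial.aeval (walkOperator G) (Polynomial.Chebyshev.T ℝ m) h x| ≤ Fintype.card V := by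
  set u := Polynomial.aeval (walkOperator G) (Polynomial.Chebyshev.T ℝ m) h
  have hdeg : (1 : ℝ) ≤ G.degree x := mod_cast hx
  have hterm : ∀ v ∈ Finset.univ, (0 : ℝ) ≤ G.degree v * u v * u v := fun v _ => by
    rw [mul_assoc]
    exact mul_nonneg (Nat.cast_nonneg _) (mul_self_nonneg _)
  refine abs_le_of_sq_le_sq ?_ (Nat.cast_nonneg _)
  calc u x ^ 2 ≤ G.degree x * u x * u x := by nlinarith [sq_nonneg (u x)]
    _ ≤ degreeForm G u u := by
        rw [degreeForm_apply]
        exact Finset.single_le_sum hterm (Finset.mem_univ x)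
    _ ≤ degreeForm G h h :=
        chebyshev_T_apply_le isAdjointPair_degreeForm_walkOperator degreeForm_walkOperator_le m h
    _ ≤ ∑ _v : V, (Fintype.card V : ℝ) := by
        rw [degreeForm_apply]
        refine Finset.sum_le_sum fun v _ => ?_
        rw [mul_assoc, ← sq]
        have hsq := (sq_le_one_iff_abs_le_one _).2 (hh v)
        exact (mul_le_of_le_one_right (Nat.cast_nonneg _) hsq).trans
          (mod_cast (G.degree_lt_card_verts v).le)
    _ = (Fintype.card V : ℝ) ^ 2 := by
        rw [Finset.sum_const, Finset.card_univ, nsmul_eq_mul, sq]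

theorem aeval_walkOperator_eq_zero_of_natDegree_lt {p : Polynomial ℝ} {r : ℕ}
    (hp : p.natDegree < r) {h : V → ℝ} {x : V} (hh : ∀ w, G.dist x w < r → h w = 0) :
    Polynomial.aeval (walkOperator G) p h x = 0 := by
  rw [Polynomial.aeval_eq_sum_range, LinearMap.sum_apply, Finset.sum_apply]
  refine Finset.sum_eq_zero fun i hi => ?_
  have hir := (Finset.mem_range_succ_iff.1 hi).trans_lt hp
  rw [LinearMap.smul_apply, Pi.smul_apply,
    walkOperator_pow_eq_zero_of_dist_le fun w hw => hh w (hw.trans_lt hir), smul_zero]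

theorem abs_chebyshev_T_walkOperator_le_mul_cosh {h : V → ℝ} (hh : ∀ v, |h v| ≤ 1) {x : V}
    (hx : 0 < G.degree x) {r : ℕ} (hzero : ∀ w, G.dist x w < r → h w = 0) (s : ℝ) (m : ℤ) :
    |Polynomial.aeval (walkOperator G) (Polynomial.Chebyshev.T ℝ m) h x| ≤
      2 * Fintype.card V * Real.exp (-(s * r)) * Real.cosh (s * m) := by
  rcases lt_or_ge m.natAbs r with hm | hm
  · rw [aeval_walkOperator_eq_zero_of_natDegree_lt
      ((Polynomial.Chebyshev.natDegree_T ℝ m).trans_lt hm) hzero, abs_zero]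
    positivity
  · have hsm : s * r ≤ |s * m| := by
      have hm' : (r : ℝ) ≤ |(m : ℝ)| := by
        rw [← Int.cast_abs, ← Nat.cast_natAbs]
        exact_mod_cast hm
      rw [abs_mul]
      exact mul_le_mul (le_abs_self s) hm' (Nat.cast_nonneg r) (abs_nonneg s)
    have hcosh : Real.exp (s * r) ≤ 2 * Real.cosh (s * m) := by
      rw [← Real.cosh_abs, Real.cosh_eq]
      linarith [Real.exp_le_exp.2 hsm, Real.exp_pos (-|s * m|)]
    calc |Polynomial.aeval (walkOperator G) (Polynomial.Chebyshev.T ℝ m) h x|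
        ≤ Fintype.card V := abs_chebyshev_T_walkOperator_le hh hx m
      _ = Fintype.card V * Real.exp (-(s * r)) * Real.exp (s * r) := by
          rw [mul_assoc, ← Real.exp_add, neg_add_cancel, Real.exp_zero, mul_one]
      _ ≤ Fintype.card V * Real.exp (-(s * r)) * (2 * Real.cosh (s * m)) := by gcongr
      _ = 2 * Fintype.card V * Real.exp (-(s * r)) * Real.cosh (s * m) := by ring

/-- A form of the Varopoulos–Carne bound. -/
theorem walkProb_le_dist_le {x : V} (hx : 0 < G.degree x) (t r : ℕ) (s : ℝ) :
    walkProb G t x {y | r ≤ G.dist x y} ≤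
      2 * Fintype.card V * Real.exp (t * (s ^ 2 / 2) - s * r) := by
  set h : V → ℝ := {y | r ≤ G.dist x y}.indicator 1 with hh
  have hh_le : ∀ v, |h v| ≤ 1 := fun v => by
    by_cases hv : r ≤ G.dist x v <;> simp [hh, hv]
  have hh_zero : ∀ w, G.dist x w < r → h w = 0 := fun w hw =>
    Set.indicator_of_notMem (by simpa using hw) _
  let φ : Polynomial ℝ →ₗ[ℝ] ℝ := (LinearMap.proj x ∘ₗ LinearMap.applyₗ h) ∘ₗ
    (Polynomial.aeval (walkOperator G)).toLinearMap
  have hbound := abs_map_X_pow_mul_chebyshev_T_le φ _ s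
    (abs_chebyshev_T_walkOperator_le_mul_cosh hh_le hx hh_zero s) t 0
  rw [Int.cast_zero, mul_zero, Real.cosh_zero, mul_one] at hbound
  calc walkProb G t x {y | r ≤ G.dist x y}
      = φ (Polynomial.X ^ t * Polynomial.Chebyshev.T ℝ 0) := by
        simp [φ, walkProb, hh]
    _ ≤ 2 * Fintype.card V * Real.exp (-(s * r)) * Real.cosh s ^ t := (le_abs_self _).trans hbound
    _ ≤ 2 * Fintype.card V * Real.exp (-(s * r)) * Real.exp (s ^ 2 / 2) ^ t := by
        gcongr
        exact Real.cosh_le_exp_half_sq s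
    _ = 2 * Fintype.card V * Real.exp (t * (s ^ 2 / 2) - s * r) := by
        rw [← Real.exp_nat_mul, sub_eq_add_neg, Real.exp_add]
        ring

theorem sum_neighborFinset_le_card_mul_walkOperator {f : V → ℝ} (hf : 0 ≤ f) (v : V) :
    ∑ w ∈ G.neighborFinset v, f w ≤ Fintype.card V * walkOperator G f v := by
  rw [← degree_mul_walkOperator]
  exact mul_le_mul_of_nonneg_right (mod_cast (G.degree_lt_card_verts v).le)
    (walkOperator_nonneg hf v)

theorem sum_neighborFinset_sum_neighborFinset (x : V) (F : V → ℝ) :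
    ∑ y ∈ G.neighborFinset x, ∑ z ∈ G.neighborFinset y, F z =
      ∑ z, (∑ y ∈ G.neighborFinset z, (G.neighborSet x).indicator 1 y) * F z := by
  have hindicator : ∑ y ∈ G.neighborFinset x, ∑ z ∈ G.neighborFinset y, F z =
      ∑ y, ∑ z ∈ G.neighborFinset y, (G.neighborSet x).indicator 1 y * F z := by
    simp [Set.indicator_apply, G.neighborFinset_eq_filter, Finset.sum_filter]
  rw [hindicator, sum_sum_neighborFinset_comm]
  simp only [Finset.sum_mul]

theorem degree_le_sum_degree_mul_walkProb_three {x : V} (hx : 0 < G.degree x) :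
    (G.degree x : ℝ) ≤
      (∑ y ∈ G.neighborFinset x, (G.degree y : ℝ)) * walkProb G 3 x (G.neighborSet x) := by
  set f : V → ℝ := (G.neighborSet x).indicator 1
  have hx' : (0 : ℝ) < G.degree x := mod_cast hx
  have hf : 0 ≤ f := Set.indicator_nonneg fun _ _ => zero_le_one
  have hPf : walkOperator G f x = 1 := by
    have hf_one : ∀ w ∈ G.neighborFinset x, f w = 1 := fun w hw =>
      Set.indicator_of_mem ((G.mem_neighborFinset x w).1 hw) _
    rw [walkOperator_apply, div_eq_one_iff_eq hx'.ne', Finset.sum_congr rfl hf_one,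
      Finset.sum_const, SimpleGraph.card_neighborFinset_eq_degree, nsmul_one]
  have hdeg : ∀ y ∈ G.neighborFinset x, (0 : ℝ) < G.degree y := fun y hy =>
    mod_cast (G.degree_pos_iff_exists_adj y).2 ⟨x, ((G.mem_neighborFinset x y).1 hy).symm⟩
  have hreturn : ∀ y ∈ G.neighborFinset x,
      1 / (G.degree y : ℝ) ≤ walkOperator G (walkOperator G f) y := fun y hy => by
    have hxy : x ∈ G.neighborFinset y := by simpa [G.adj_comm] using hy
    rw [walkOperator_apply]
    gcongr
    exact hPf.ge.trans (Finset.single_le_sum (fun z _ => walkOperator_nonneg hf z) hxy)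
  have hcauchy := Finset.sum_sq_le_sum_mul_sum_of_sq_le_mul (G.neighborFinset x) (r := fun _ => 1)
    (fun y hy => (hdeg y hy).le) (g := fun y => 1 / (G.degree y : ℝ))
    (fun y _ => by positivity) (fun y hy => by rw [mul_one_div_cancel (hdeg y hy).ne', one_pow])
  rw [Finset.sum_const, SimpleGraph.card_neighborFinset_eq_degree, nsmul_one] at hcauchy
  refine le_of_mul_le_mul_left ?_ hx'
  calc (G.degree x : ℝ) * G.degree x
      ≤ (∑ y ∈ G.neighborFinset x, (G.degree y : ℝ)) *
          ∑ y ∈ G.neighborFinset x, walkOperator G (walkOperator G f) y := by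
        rw [← sq]
        exact hcauchy.trans (mul_le_mul_of_nonneg_left (Finset.sum_le_sum hreturn)
          (Finset.sum_nonneg fun y hy => (hdeg y hy).le))
    _ = _ := by
        rw [← degree_mul_walkOperator (walkOperator G (walkOperator G f)), mul_left_comm]
        rfl

theorem sq_sum_degree_le_degree_mul_walkProb_three (x : V) :
    (∑ y ∈ G.neighborFinset x, (G.degree y : ℝ)) ^ 2 ≤
      G.degree x * Fintype.card V ^ 3 * walkProb G 3 x (G.neighborSet x) := by
  set f : V → ℝ := (G.neighborSet x).indicator 1
  set n : ℝ := (Fintype.card V : ℝ)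
  set common : V → ℝ := fun z => ∑ y ∈ G.neighborFinset z, f y
  have hf : 0 ≤ f := Set.indicator_nonneg fun _ _ => zero_le_one
  have hsum : ∑ y ∈ G.neighborFinset x, (G.degree y : ℝ) = ∑ z, common z := by
    simpa using sum_neighborFinset_sum_neighborFinset (G := G) x fun _ => 1
  have hpaths : ∑ y ∈ G.neighborFinset x, ∑ z ∈ G.neighborFinset y, common z
      ≤ n ^ 2 * (G.degree x * walkProb G 3 x (G.neighborSet x)) :=
    calc ∑ y ∈ G.neighborFinset x, ∑ z ∈ G.neighborFinset y, common z
        ≤ ∑ y ∈ G.neighborFinset x, ∑ z ∈ G.neighborFinset y, n * walkOperator G f z := by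
          gcongr
          exact sum_neighborFinset_le_card_mul_walkOperator hf _
      _ ≤ ∑ y ∈ G.neighborFinset x, n * (n * walkOperator G (walkOperator G f) y) := by
          refine Finset.sum_le_sum fun y _ => ?_
          rw [← Finset.mul_sum]
          gcongr
          exact sum_neighborFinset_le_card_mul_walkOperator (walkOperator_nonneg hf) _
      _ = n ^ 2 * (G.degree x * walkProb G 3 x (G.neighborSet x)) := by
          rw [← Finset.mul_sum, ← Finset.mul_sum, ← degree_mul_walkOperator, sq, mul_assoc]
          rfl
  calc (∑ y ∈ G.neighborFinset x, (G.degree y : ℝ)) ^ 2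
      ≤ n * ∑ z, common z ^ 2 := by
        rw [hsum]
        exact sq_sum_le_card_mul_sum_sq
    _ = n * ∑ y ∈ G.neighborFinset x, ∑ z ∈ G.neighborFinset y, common z := by
        rw [sum_neighborFinset_sum_neighborFinset]
        simp only [sq, common, f]
    _ ≤ n * (n ^ 2 * (G.degree x * walkProb G 3 x (G.neighborSet x))) := by gcongr
    _ = _ := by ring

theorem degree_le_card_pow_mul_walkProb_three_pow (x : V) :
    (G.degree x : ℝ) ≤ Fintype.card V ^ 3 * walkProb G 3 x (G.neighborSet x) ^ 3 := by
  have hp : 0 ≤ walkProb G 3 x (G.neighborSet x) := walkProb_nonneg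
  rcases (G.degree x).eq_zero_or_pos with hx | hx
  · rw [hx, Nat.cast_zero]
    positivity
  refine le_of_mul_le_mul_left ?_ (Nat.cast_pos.2 hx : (0 : ℝ) < G.degree x)
  calc (G.degree x : ℝ) * G.degree x
      ≤ ((∑ y ∈ G.neighborFinset x, (G.degree y : ℝ)) * walkProb G 3 x (G.neighborSet x)) ^ 2 := by
        rw [← sq]
        gcongr
        exact degree_le_sum_degree_mul_walkProb_three hx
    _ ≤ G.degree x * Fintype.card V ^ 3 * walkProb G 3 x (G.neighborSet x)
          * walkProb G 3 x (G.neighborSet x) ^ 2 := by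
        rw [mul_pow]
        gcongr
        exact sq_sum_degree_le_degree_mul_walkProb_three x
    _ = _ := by ring

theorem inv_le_walkProb_three {x : V} {K : ℝ} (hK : 0 < K) (hx : K ≤ G.degree x)
    (hcard : (Fintype.card V : ℝ) ^ 3 ≤ K ^ 4) : K⁻¹ ≤ walkProb G 3 x (G.neighborSet x) := by
  refine le_of_pow_le_pow_left₀ three_ne_zero walkProb_nonneg ?_
  have hpow : K ≤ K ^ 4 * walkProb G 3 x (G.neighborSet x) ^ 3 :=
    hx.trans ((degree_le_card_pow_mul_walkProb_three_pow x).trans (by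
      gcongr
      exact pow_nonneg walkProb_nonneg 3))
  rw [inv_pow, inv_le_iff_one_le_mul₀ (by positivity)]
  refine le_of_mul_le_mul_left ?_ hK
  linarith

end Walk

section Bellman

variable {V : Type*} [Fintype V] (G : SimpleGraph V)

/-- The expected number of remaining moves when the cop has just stepped to `c` and the robber is
still at `r`, counting the move in progress, if `f` gives the expected number of moves that follow
it. -/
noncomputable def moveCost (f : V → V → ℝ) (c r : V) : ℝ :=
  1 + if c = r then 0 else walkOperator G (f c) r

/-- The Bellman operator of the game: the value at `(c, r)` (cop, robber) of an optimal first step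
of the cop when the continuation has value `f`. A cop at an isolated vertex `c ≠ r` gets the junk
value `0`. -/
noncomputable def bellman (f : V → V → ℝ) (c r : V) : ℝ :=
  if c = r then 0 else ⨅ c' : G.neighborSet c, moveCost G f c' r

/-- The least possible expected number of moves, among the first `k`, that start before capture. -/
noncomputable def horizonValue (k : ℕ) : V → V → ℝ :=
  (bellman G)^[k] 0

variable {G}

theorem moveCost_mono {f g : V → V → ℝ} (h : f ≤ g) (c r : V) :
    moveCost G f c r ≤ moveCost G g c r := by
  unfold moveCost
  gcongr
  split_ifs
  exacts [le_rfl, walkOperator_le_of_adj fun w _ => h c w]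

theorem moveCost_nonneg {f : V → V → ℝ} (h : 0 ≤ f) (c r : V) : 0 ≤ moveCost G f c r := by
  unfold moveCost
  split_ifs
  exacts [by norm_num, add_nonneg zero_le_one (walkOperator_nonneg (h c) r)]

theorem bellman_monotone : Monotone (bellman G) := by
  intro f g h c r
  unfold bellman
  split_ifs
  exacts [le_rfl, ciInf_mono (Set.finite_range _).bddBelow fun c' => moveCost_mono h c' r]

theorem bellman_nonneg {f : V → V → ℝ} (h : 0 ≤ f) : 0 ≤ bellman G f := by
  intro c r
  unfold bellman
  split_ifs
  exacts [le_rfl, Real.iInf_nonneg fun c' => moveCost_nonneg h c' r]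

theorem continuous_bellman : Continuous (bellman G) := by
  have hcost : ∀ c r, Continuous fun f => moveCost G f c r := fun c r => by
    unfold moveCost
    split_ifs
    · fun_prop
    · simp only [walkOperator_apply]
      fun_prop
  refine continuous_pi fun c => continuous_pi fun r => ?_
  unfold bellman
  split_ifs
  · exact continuous_const
  rcases isEmpty_or_nonempty (G.neighborSet c)
  · simp only [Real.iInf_of_isEmpty]
    exact continuous_const
  · simp only [← Finset.inf'_univ_eq_ciInf]
    exact Continuous.finset_inf'_apply _ fun c' _ => hcost c' r

theorem exists_adj_moveCost_eq_bellman (hd : ∀ v, 0 < G.degree v) (f : V → V → ℝ) {c r : V}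
    (h : c ≠ r) : ∃ c', G.Adj c c' ∧ moveCost G f c' r = bellman G f c r := by
  obtain ⟨w, hw⟩ := (G.degree_pos_iff_exists_adj c).1 (hd c)
  have : Nonempty (G.neighborSet c) := ⟨⟨w, hw⟩⟩
  obtain ⟨c', hc'⟩ := exists_eq_ciInf_of_finite (f := fun c' : G.neighborSet c => moveCost G f c' r)
  exact ⟨c', c'.2, hc'.trans (if_neg h).symm⟩

theorem horizonValue_succ (k : ℕ) : horizonValue G (k + 1) = bellman G (horizonValue G k) :=
  Function.iterate_succ_apply' _ _ _

theorem horizonValue_monotone : Monotone (horizonValue G) :=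
  bellman_monotone.monotone_iterate_of_le_map (bellman_nonneg le_rfl)

theorem horizonValue_nonneg (k : ℕ) : 0 ≤ horizonValue G k :=
  horizonValue_monotone (Nat.zero_le k)

theorem horizonValue_self (k : ℕ) (c : V) : horizonValue G k c c = 0 := by
  cases k with
  | zero => rfl
  | succ k => rw [horizonValue_succ, bellman, if_pos rfl]

theorem horizonValue_succ_le_moveCost {c c' : V} (h : G.Adj c c') (k : ℕ) (r : V) :
    horizonValue G (k + 1) c r ≤ moveCost G (horizonValue G k) c' r := by
  rw [horizonValue_succ, bellman]
  split_ifs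
  · exact moveCost_nonneg (horizonValue_nonneg k) c' r
  · exact ciInf_le (f := fun c' : G.neighborSet c => moveCost G (horizonValue G k) c' r)
      (Set.finite_range _).bddBelow ⟨c', h⟩

theorem horizonValue_succ_le {c c' : V} (h : G.Adj c c') (k : ℕ) (r : V) :
    horizonValue G (k + 1) c r ≤ 1 + walkOperator G (horizonValue G k c') r := by
  refine (horizonValue_succ_le_moveCost h k r).trans ?_
  unfold moveCost
  gcongr
  split_ifs
  exacts [walkOperator_nonneg (horizonValue_nonneg k c') r, le_rfl]

/-- The cop may walk `t` steps towards `x`, wherever the robber goes meanwhile. -/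
theorem exists_horizonValue_add_le (hd : ∀ v, 0 < G.degree v) {c x : V} {t : ℕ}
    (ht : t ≤ G.dist c x) :
    ∃ c', G.dist c' x + t = G.dist c x ∧ ∀ k r,
      horizonValue G (k + t) c r ≤ t + (walkOperator G ^ t) (horizonValue G k c') r := by
  induction t generalizing c with
  | zero => exact ⟨c, rfl, fun k r => by simp⟩
  | succ t ih =>
    obtain ⟨b, hcb, hb⟩ := exists_adj_dist_add_one_eq (show G.dist c x ≠ 0 by omega)
    obtain ⟨c', hc', hchase⟩ := ih (show t ≤ G.dist b x by omega)
    refine ⟨c', by omega, fun k r => ?_⟩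
    calc horizonValue G (k + t + 1) c r
        ≤ 1 + walkOperator G (horizonValue G (k + t) b) r := horizonValue_succ_le hcb _ r
      _ ≤ 1 + walkOperator G ((fun _ => (t : ℝ)) + (walkOperator G ^ t) (horizonValue G k c')) r :=
          by
            gcongr
            exact walkOperator_le_of_adj fun w _ => hchase k w
      _ = (t + 1 : ℕ) + (walkOperator G ^ (t + 1)) (horizonValue G k c') r := by
          rw [map_add, walkOperator_const hd, pow_succ', Module.End.mul_apply, Pi.add_apply]
          push_cast
          ring

theorem exists_isFixedPt_bellman {B : ℝ} (hB : ∀ k c r, horizonValue G k c r ≤ B) :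
    ∃ g, 0 ≤ g ∧ (∀ c r, g c r ≤ B) ∧ Function.IsFixedPt (bellman G) g := by
  have hbdd : ∀ c r, BddAbove (Set.range fun k => horizonValue G k c r) := fun c r =>
    ⟨B, Set.forall_mem_range.2 fun k => hB k c r⟩
  have hlim : Filter.Tendsto (horizonValue G) Filter.atTop
      (nhds fun c r => ⨆ k, horizonValue G k c r) :=
    tendsto_pi_nhds.2 fun c => tendsto_pi_nhds.2 fun r =>
      tendsto_atTop_ciSup (fun _ _ h => horizonValue_monotone h c r) (hbdd c r)
  exact ⟨_, fun c r => Real.iSup_nonneg fun k => horizonValue_nonneg k c r,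
    fun c r => ciSup_le fun k => hB k c r,
    isFixedPt_of_tendsto_iterate hlim continuous_bellman.continuousAt⟩

theorem exists_policy_moveCost_le (hd : ∀ v, 0 < G.degree v) {B : ℝ}
    (hB : ∀ k c r, horizonValue G k c r ≤ B) :
    ∃ (g : V → V → ℝ) (φ : V → V → V), 0 ≤ g ∧ (∀ c r, g c r ≤ B) ∧
      (∀ c r, G.Adj c (φ c r)) ∧ ∀ c r, c ≠ r → moveCost G g (φ c r) r ≤ g c r := by
  obtain ⟨g, hg, hgB, hfix⟩ := exists_isFixedPt_bellman hB
  have hstep : ∀ c r, ∃ c', G.Adj c c' ∧ (c ≠ r → moveCost G g c' r ≤ g c r) := fun c r => by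
    rcases eq_or_ne c r with rfl | hcr
    · obtain ⟨w, hw⟩ := (G.degree_pos_iff_exists_adj c).1 (hd c)
      exact ⟨w, hw, fun h => absurd rfl h⟩
    · obtain ⟨c', hadj, hc'⟩ := exists_adj_moveCost_eq_bellman hd g hcr
      exact ⟨c', hadj, fun _ => hc'.le.trans_eq (congrFun₂ hfix c r)⟩
  choose φ hadj hφ using hstep
  exact ⟨g, φ, hg, hgB, hadj, hφ⟩

end Bellman

section ValueBounds

variable {V : Type*} [Fintype V] {G : SimpleGraph V}

theorem horizonValue_le_maxDegree (hG : G.Connected) (hd : ∀ v, 0 < G.degree v) (k : ℕ) {c r : V}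
    (h : G.dist c r ≤ 2) : horizonValue G k c r ≤ G.maxDegree := by
  induction k generalizing c r with
  | zero => exact Nat.cast_nonneg _
  | succ k ih =>
    have hr : (0 : ℝ) < G.degree r := mod_cast hd r
    have hΔ : (G.degree r : ℝ) ≤ G.maxDegree := mod_cast G.degree_le_maxDegree r
    rcases eq_or_ne c r with rfl | hcr
    · rw [horizonValue_self]
      exact Nat.cast_nonneg _
    obtain ⟨c', hadj, hc'⟩ := exists_adj_dist_add_one_eq (hG.dist_eq_zero_iff.not.2 hcr)
    rcases eq_or_ne c' r with rfl | hc'r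
    · calc horizonValue G (k + 1) c c' ≤ moveCost G (horizonValue G k) c' c' :=
            horizonValue_succ_le_moveCost hadj k c'
        _ = 1 := by rw [moveCost, if_pos rfl, add_zero]
        _ ≤ G.degree c' := mod_cast hd c'
        _ ≤ G.maxDegree := hΔ
    · have hdist : G.dist r c' = 1 := by
        have := hG.dist_eq_zero_iff.not.2 hc'r
        rw [G.dist_comm]
        omega
      have hmix := walkOperator_pow_le_add_mul_walkProb hd (f := horizonValue G k c') (t := 1)
        (x := r) (s := {c'}) (M := G.maxDegree) (δ := -G.maxDegree)
        (by rintro w rfl -; rw [horizonValue_self, add_neg_cancel])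
        fun w _ hw => ih ((hG.dist_triangle (v := r)).trans (by rw [G.dist_comm]; omega))
      rw [walkProb_one_singleton (SimpleGraph.dist_eq_one_iff_adj.1 hdist), pow_one,
        ← div_eq_mul_inv, neg_div] at hmix
      have hratio := (one_le_div hr).2 hΔ
      linarith [horizonValue_succ_le hadj k r]

/-- Against a robber at a vertex of small degree the cop makes one step towards him, hoping that he
makes one towards her; against a robber at a vertex of large degree she makes three steps, hoping
that he returns to a neighbour of `r`. -/
theorem exists_approach (hG : G.Connected) (hd : ∀ v, 0 < G.degree v) {K : ℝ} (hK : 0 < K)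
    (hcard : (Fintype.card V : ℝ) ^ 3 ≤ K ^ 4) {d : ℕ} (hd2 : 2 ≤ d) {c r : V}
    (h : G.dist c r = d + 1) :
    ∃ (c' : V) (t : ℕ), 1 ≤ t ∧ t ≤ 3 ∧ G.dist c' r + t = d + 1 ∧
      (∀ k, horizonValue G (k + t) c r ≤ t + (walkOperator G ^ t) (horizonValue G k c') r) ∧
      K⁻¹ ≤ walkProb G t r {w | G.dist c' w ≤ d} := by
  have hr : (0 : ℝ) < G.degree r := mod_cast hd r
  rcases le_or_gt (G.degree r : ℝ) K with hdeg | hdeg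
  · obtain ⟨c', hc', hchase⟩ := exists_horizonValue_add_le hd (show 1 ≤ G.dist c r by omega)
    obtain ⟨y, hadj, hy⟩ := exists_adj_dist_add_one_eq
      (show G.dist r c' ≠ 0 by rw [G.dist_comm]; omega)
    rw [G.dist_comm, G.dist_comm (u := r)] at hy
    refine ⟨c', 1, le_rfl, by norm_num, hc'.trans h, fun k => hchase k r, ?_⟩
    calc K⁻¹ ≤ (G.degree r : ℝ)⁻¹ := by gcongr
      _ = walkProb G 1 r {y} := (walkProb_one_singleton hadj).symm
      _ ≤ walkProb G 1 r {w | G.dist c' w ≤ d} := walkProb_mono fun w hw _ => by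
          obtain rfl := Set.mem_singleton_iff.1 hw
          change G.dist c' w ≤ d
          omega
  · obtain ⟨c', hc', hchase⟩ := exists_horizonValue_add_le hd (show 3 ≤ G.dist c r by omega)
    refine ⟨c', 3, by norm_num, le_rfl, hc'.trans h, fun k => hchase k r, ?_⟩
    calc K⁻¹ ≤ walkProb G 3 r (G.neighborSet r) := inv_le_walkProb_three hK hdeg.le hcard
      _ ≤ walkProb G 3 r {w | G.dist c' w ≤ d} := walkProb_mono fun w hw _ => by
          have hone := SimpleGraph.dist_eq_one_iff_adj.2 hw
          have htri := hG.dist_triangle (u := c') (v := r) (w := w)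
          change G.dist c' w ≤ d
          omega

theorem horizonValue_le_add_of_dist_eq_succ (hG : G.Connected) (hd : ∀ v, 0 < G.degree v) {K : ℝ}
    (hK : 0 < K) (hcard : (Fintype.card V : ℝ) ^ 3 ≤ K ^ 4) {d : ℕ} (hd2 : 2 ≤ d) {B : ℝ}
    (hB : ∀ k c r, G.dist c r ≤ d → horizonValue G k c r ≤ B) (k : ℕ) {c r : V}
    (h : G.dist c r = d + 1) : horizonValue G k c r ≤ B + 3 * K := by
  induction k generalizing c r with
  | zero =>
    have hB0 := hB 0 c c (by simp)
    have h0 : horizonValue G 0 c r = horizonValue G 0 c c := rfl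
    linarith
  | succ k ih =>
    obtain ⟨c', t, ht1, ht3, hc', hchase, hprob⟩ := exists_approach hG hd hK hcard hd2 h
    have hmix := walkOperator_pow_le_add_mul_walkProb hd (f := horizonValue G k c') (t := t)
      (x := r) (s := {w | G.dist c' w ≤ d}) (M := B + 3 * K) (δ := -(3 * K))
      (fun w hw _ => (hB k c' w hw).trans_eq (by ring))
      fun w hw hwt => ih (by
        have htri := hG.dist_triangle (u := c') (v := r) (w := w)
        have hfar : d < G.dist c' w := not_le.1 hw
        omega)
    have hgain : 3 ≤ 3 * K * walkProb G t r {w | G.dist c' w ≤ d} :=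
      calc (3 : ℝ) = 3 * K * K⁻¹ := by rw [mul_assoc, mul_inv_cancel₀ hK.ne', mul_one]
        _ ≤ 3 * K * walkProb G t r {w | G.dist c' w ≤ d} := by gcongr
    have ht : (t : ℝ) ≤ 3 := mod_cast ht3
    have hmono := horizonValue_monotone (G := G) (show k + 1 ≤ k + t by omega) c r
    linarith [hchase k]

theorem horizonValue_le_maxDegree_add (hG : G.Connected) (hd : ∀ v, 0 < G.degree v) {K : ℝ}
    (hK : 0 < K) (hcard : (Fintype.card V : ℝ) ^ 3 ≤ K ^ 4) (k : ℕ) (c r : V) :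
    horizonValue G k c r ≤ G.maxDegree + 3 * K * G.dist c r := by
  have hlevel : ∀ d k c r, G.dist c r ≤ d →
      horizonValue G k c r ≤ G.maxDegree + 3 * K * d := fun d => by
    induction d with
    | zero =>
      intro k c r h
      exact (horizonValue_le_maxDegree hG hd k (by omega)).trans (by simp)
    | succ d ih =>
      intro k c r h
      rw [Nat.cast_succ, mul_add, mul_one, ← add_assoc]
      rcases h.lt_or_eq with h | h
      · linarith [ih k c r (Nat.lt_succ_iff.1 h)]
      rcases lt_or_ge d 2 with hd2 | hd2
      · have hsmall := horizonValue_le_maxDegree hG hd k (show G.dist c r ≤ 2 by omega)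
        have : 0 ≤ 3 * K * d := by positivity
        linarith
      · exact horizonValue_le_add_of_dist_eq_succ hG hd hK hcard hd2 ih k h
  exact hlevel _ k c r le_rfl

/-- The cop walks to the vertex where the robber was at the start; by then the robber has most
likely not got further than `ρ` from there. -/
theorem horizonValue_le_dist_add (hG : G.Connected) (hd : ∀ v, 0 < G.degree v) {M B : ℝ} {ρ : ℕ}
    (hM : ∀ k c r, horizonValue G k c r ≤ M)
    (hB : ∀ k c r, G.dist c r ≤ ρ → horizonValue G k c r ≤ B) (s : ℝ) (k : ℕ) (c r : V) :
    horizonValue G k c r ≤ G.dist c r + B +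
      M * (2 * Fintype.card V * Real.exp (G.dist c r * (s ^ 2 / 2) - s * ρ)) := by
  obtain ⟨c', hc', hchase⟩ := exists_horizonValue_add_le hd (le_refl (G.dist c r))
  obtain rfl : c' = r := hG.dist_eq_zero_iff.1 (by omega)
  have hB0 : 0 ≤ B := (horizonValue_self 0 c').ge.trans (hB 0 c' c' (by simp))
  have hM0 : 0 ≤ M := (horizonValue_nonneg 0 c' c').trans (hM 0 c' c')
  have hmix := walkOperator_pow_le_add_mul_walkProb hd (f := horizonValue G k c')
    (t := G.dist c c') (x := c') (s := {w | ρ ≤ G.dist c' w}) (M := B) (δ := M)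
    (fun w _ _ => (hM k c' w).trans (le_add_of_nonneg_left hB0))
    fun w hw _ => hB k c' w (not_le.1 hw).le
  have htail := mul_le_mul_of_nonneg_left (walkProb_le_dist_le (hd c') (G.dist c c') ρ s) hM0
  have hmono := horizonValue_monotone (G := G) (show k ≤ k + G.dist c c' by omega) c c'
  linarith [hchase k c']

theorem horizonValue_le_add_mul_dist (hG : G.Connected) (hd : ∀ v, 0 < G.degree v)
    {e M B D : ℝ} (he : 0 < e) (he1 : e ≤ 1) (hM : ∀ k c r, horizonValue G k c r ≤ M)
    (hB : ∀ k c r, (G.dist c r : ℝ) ≤ D → horizonValue G k c r ≤ B) (hD : 6 / e ≤ D)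
    (htail : M * (2 * Fintype.card V * Real.exp (-((e / 4) ^ 2 * D / 2))) ≤ 1)
    (k : ℕ) (c r : V) :
    horizonValue G k c r ≤ B + (1 + e) * G.dist c r := by
  induction hdist : G.dist c r using Nat.strong_induction_on generalizing k c r with
  | _ d ih =>
  rcases le_or_gt (d : ℝ) D with hdD | hdD
  · have hnear := hB k c r (hdist ▸ hdD)
    have : 0 ≤ (1 + e) * d := by positivity
    linarith
  have hM0 : 0 ≤ M := (horizonValue_nonneg 0 c r).trans (hM 0 c r)
  have hed : 6 ≤ e * d := by
    rw [div_le_iff₀ he] at hD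
    nlinarith
  have hd6 : (6 : ℝ) ≤ d := by nlinarith
  set ρ := ⌈e / 4 * d⌉₊
  have hρ_ge : e / 4 * d ≤ ρ := Nat.le_ceil _
  have hρ_lt : (ρ : ℝ) < e / 4 * d + 1 := Nat.ceil_lt_add_one (by positivity)
  have hρd : ρ < d := by
    have : (ρ : ℝ) < d := by nlinarith
    exact_mod_cast this
  have hnear : ∀ k c r, G.dist c r ≤ ρ → horizonValue G k c r ≤ B + (1 + e) * ρ :=
    fun k c r h => (ih _ (h.trans_lt hρd) k c r rfl).trans (by gcongr)
  have hchase := horizonValue_le_dist_add hG hd hM hnear (e / 4) k c r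
  rw [hdist] at hchase
  have hexp : d * ((e / 4) ^ 2 / 2) - e / 4 * ρ ≤ -((e / 4) ^ 2 * D / 2) := by
    nlinarith [mul_le_mul_of_nonneg_left hρ_ge (show 0 ≤ e / 4 by positivity),
      mul_le_mul_of_nonneg_left hdD.le (sq_nonneg (e / 4))]
  have hfar : M * (2 * Fintype.card V * Real.exp (d * ((e / 4) ^ 2 / 2) - e / 4 * ρ)) ≤ 1 :=
    le_trans (by gcongr) htail
  have hρ_cost : (1 + e) * ρ + 1 ≤ e * d := by nlinarith
  linarith

/-- With `y = n ^ (1 / 8)`: a vertex is large if its degree exceeds `y ^ 6`, and positions at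
distance at most `y` have value at most `Δ + 3 y ^ 7`. -/
theorem horizonValue_le_one_add_mul_card (hG : G.Connected) (hd : ∀ v, 0 < G.degree v) {e y : ℝ}
    (he : 0 < e) (he1 : e ≤ 1) (hy : y ^ 8 = Fintype.card V) (hye : 7 / e ≤ y)
    (htail : 18 * y ^ 22 * Real.exp (-((e / 4) ^ 2 * y / 2)) ≤ 1) (k : ℕ) (c r : V) :
    horizonValue G k c r ≤ (1 + 2 * e) * Fintype.card V := by
  have hey : 7 ≤ e * y := by
    rw [div_le_iff₀ he] at hye
    linarith
  have hy7 : 7 ≤ y := by nlinarith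
  have hK : 0 < y ^ 6 := by positivity
  have hK1 : 1 ≤ y ^ 6 := one_le_pow₀ (by linarith)
  have hcard : (Fintype.card V : ℝ) ^ 3 ≤ (y ^ 6) ^ 4 := by
    rw [← hy, ← pow_mul, ← pow_mul]
  have hy8 : 1 ≤ y ^ 8 := one_le_pow₀ (by linarith)
  have hdiam : ∀ c r, (G.dist c r : ℝ) + G.maxDegree ≤ y ^ 8 + 2 := fun c r => by
    rw [hy]
    exact_mod_cast dist_add_maxDegree_le c r
  have hlevel := horizonValue_le_maxDegree_add hG hd hK hcard
  have hM : ∀ k c r, horizonValue G k c r ≤ 9 * y ^ 14 := fun k c r =>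
    calc horizonValue G k c r ≤ G.maxDegree + 3 * y ^ 6 * G.dist c r := hlevel k c r
      _ ≤ 3 * y ^ 6 * (G.dist c r + G.maxDegree) := by
          nlinarith [(Nat.cast_nonneg G.maxDegree : (0 : ℝ) ≤ _)]
      _ ≤ 3 * y ^ 6 * (3 * y ^ 8) := by
          gcongr
          linarith [hdiam c r]
      _ = 9 * y ^ 14 := by ring
  have hB : ∀ k c r, (G.dist c r : ℝ) ≤ y → horizonValue G k c r ≤ G.maxDegree + 3 * y ^ 7 :=
    fun k c r h => (hlevel k c r).trans (by rw [pow_succ y 6, ← mul_assoc]; gcongr)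
  have hfar : 9 * y ^ 14 * (2 * Fintype.card V * Real.exp (-((e / 4) ^ 2 * y / 2))) ≤ 1 :=
    (le_of_eq (by rw [← hy]; ring)).trans htail
  have hlinear := horizonValue_le_add_mul_dist hG hd he he1 hM hB
    ((div_le_div_of_nonneg_right (by norm_num) he.le).trans hye) hfar k c r
  have hy7_pow : 7 * y ^ 7 ≤ e * y ^ 8 := by
    have : 0 < y ^ 7 := by positivity
    nlinarith
  have hy7_one : 1 ≤ y ^ 7 := one_le_pow₀ (by linarith)
  rw [← hy]
  nlinarith [hdiam c r, (Nat.cast_nonneg G.maxDegree : (0 : ℝ) ≤ _)]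

end ValueBounds

theorem eventually_const_mul_pow_mul_exp_neg_le_one (C : ℝ) (m : ℕ) {b : ℝ} (hb : 0 < b) :
    ∀ᶠ y : ℝ in Filter.atTop, C * y ^ m * Real.exp (-(b * y)) ≤ 1 := by
  have hlim := (tendsto_rpow_mul_exp_neg_mul_atTop_nhds_zero m b hb).const_mul C
  rw [mul_zero] at hlim
  filter_upwards [hlim.eventually (eventually_le_nhds zero_lt_one)] with y hy
  rwa [mul_assoc, ← Real.rpow_natCast, ← neg_mul]

theorem eventually_horizonValue_le {ε : ℝ} (hε : 0 < ε) :
    ∀ᶠ n : ℕ in Filter.atTop, ∀ (V : Type*) [Fintype V] (G : SimpleGraph V), Fintype.card V = n →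
      G.Connected → (∀ v, 0 < G.degree v) → ∀ k c r, horizonValue G k c r ≤ (1 + ε) * n := by
  set e := min ε 1 / 2 with he_def
  have he : 0 < e := by positivity
  have he1 : e ≤ 1 := by linarith [min_le_right ε 1]
  have hroot : Filter.Tendsto (fun n : ℕ => (n : ℝ) ^ ((8 : ℕ) : ℝ)⁻¹) Filter.atTop Filter.atTop :=
    (tendsto_rpow_atTop (by norm_num)).comp tendsto_natCast_atTop_atTop
  filter_upwards [hroot.eventually (Filter.eventually_ge_atTop (7 / e)),
    hroot.eventually (eventually_const_mul_pow_mul_exp_neg_le_one 18 22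
      (show 0 < (e / 4) ^ 2 / 2 by positivity))] with n hlarge htail
  rintro V _ G rfl hG hd k c r
  rw [← mul_div_right_comm] at htail
  have hbound := horizonValue_le_one_add_mul_card hG hd he he1
    (Real.rpow_inv_natCast_pow (Nat.cast_nonneg _) (by norm_num)) hlarge htail k c r
  refine hbound.trans ?_
  gcongr
  linarith [min_le_left ε 1]

section Strategy

variable {V : Type}

/-- The strategy of a cop who starts at `u` and always steps from `c` to `φ c r` when the robber is
at `r`; it replays the observed robber positions to recover the cop's current vertex. -/
def positionalStrategy (φ : V → V → V) (u : V) (l : List V) : V :=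
  l.foldl φ u

theorem copPos_positionalStrategy_shift (φ : V → V → V) (u : V) (r : ℕ → V) (k : ℕ) :
    copPos (positionalStrategy φ u) u r (k + 1) =
      copPos (positionalStrategy φ (φ u (r 0))) (φ u (r 0)) (fun i => r (i + 1)) k := by
  cases k with
  | zero => simp [copPos, positionalStrategy]
  | succ k => simp [copPos, positionalStrategy, List.ofFn_succ]

theorem copPos_positionalStrategy_succ (φ : V → V → V) (u : V) (r : ℕ → V) (k : ℕ) :
    copPos (positionalStrategy φ u) u r (k + 1) =
      φ (copPos (positionalStrategy φ u) u r k) (r k) := by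
  induction k generalizing u r with
  | zero => simp [copPos, positionalStrategy]
  | succ k ih => rw [copPos_positionalStrategy_shift, ih, ← copPos_positionalStrategy_shift]

theorem validStrategy_positionalStrategy {G : SimpleGraph V} {φ : V → V → V}
    (hφ : ∀ c r, G.Adj c (φ c r)) (u : V) : ValidStrategy G (positionalStrategy φ u) u := by
  intro r k
  rw [copPos_positionalStrategy_succ]
  exact hφ _ _

theorem capturedBy_positionalStrategy_succ (φ : V → V → V) (u : V) (r : ℕ → V) (k : ℕ) :
    CapturedBy (positionalStrategy φ u) u r (k + 1) ↔ r 0 = u ∨ φ u (r 0) = r 0 ∨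
      CapturedBy (positionalStrategy φ (φ u (r 0))) (φ u (r 0)) (fun i => r (i + 1)) k := by
  refine or_congr_right ⟨?_, ?_⟩
  · rintro ⟨j, hj1, hjk, hj⟩
    obtain ⟨i, rfl⟩ := Nat.exists_eq_add_of_le' hj1
    rw [copPos_positionalStrategy_shift, Nat.add_sub_cancel] at hj
    rcases i with - | i
    · exact hj.imp id fun h => Or.inl h.symm
    · exact Or.inr (Or.inr ⟨i + 1, by omega, by omega, hj⟩)
  · rintro (h | h | ⟨j, hj1, hjk, hj⟩)
    · exact ⟨1, le_rfl, by omega, Or.inl ((copPos_positionalStrategy_shift φ u r 0).trans h)⟩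
    · exact ⟨1, le_rfl, by omega, Or.inr ((copPos_positionalStrategy_shift φ u r 0).trans h.symm)⟩
    · obtain ⟨i, rfl⟩ := Nat.exists_eq_add_of_le' hj1
      refine ⟨i + 1 + 1, by omega, by omega, ?_⟩
      rwa [copPos_positionalStrategy_shift]

theorem pad_cons_zero {k : ℕ} (a : V) (q : Fin (k + 1) → V) :
    pad (k + 1) (Fin.cons a q : Fin (k + 2) → V) 0 = a := by
  simp [pad]

theorem pad_cons_succ {k : ℕ} (a : V) (q : Fin (k + 1) → V) (i : ℕ) :
    pad (k + 1) (Fin.cons a q : Fin (k + 2) → V) (i + 1) = pad k q i := by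
  have hmin : (⟨min (i + 1) (k + 1), Nat.lt_succ_of_le (Nat.min_le_right _ _)⟩ : Fin (k + 2))
      = Fin.succ ⟨min i k, Nat.lt_succ_of_le (Nat.min_le_right i k)⟩ := by
    ext
    simp
  rw [pad, hmin, Fin.cons_succ, pad]

theorem sum_ite_head_eq [Fintype V] {M : Type*} [AddCommMonoid M] {k : ℕ} (v : V)
    (F : (Fin (k + 1) → V) → M) :
    ∑ q : Fin (k + 1) → V, (if q 0 = v then F q else 0) =
      ∑ q : Fin k → V, F (Fin.cons v q : Fin (k + 1) → V) := by
  rw [← (Fin.consEquiv fun _ : Fin (k + 1) => V).sum_comp, Fintype.sum_prod_type_right]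
  simp [Fin.consEquiv]

end Strategy

section Survival

variable {V : Type} [Fintype V] {G : SimpleGraph V}

theorem survival_self (σ : List V → V) (u : V) (k : ℕ) : survival G σ u u k = 0 :=
  Finset.sum_eq_zero fun _ _ => if_neg fun h => h.2 (Or.inl (by simpa [pad] using h.1))

theorem survival_zero_le_one (σ : List V → V) (u v : V) : survival G σ u v 0 ≤ 1 := by
  calc survival G σ u v 0 ≤ ∑ q : Fin 1 → V, if q 0 = v then 1 else 0 := by
        refine Finset.sum_le_sum fun q _ => ?_
        rw [ite_and]
        split_ifs <;> simp [pathWt]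
    _ = 1 := by
        rw [sum_ite_head_eq]
        simp

variable (G) in
/-- The contribution of the trajectory `r` to the probability of surviving the first `k` moves
against a cop who starts at `u` and plays the positional strategy `φ`. -/
noncomputable def survivalWeight (φ : V → V → V) (u : V) (r : ℕ → V) (k : ℕ) : ℝ≥0∞ :=
  if CapturedBy (positionalStrategy φ u) u r k then 0 else pathWt G r k

theorem survival_positionalStrategy (φ : V → V → V) (u v : V) (k : ℕ) :
    survival G (positionalStrategy φ u) u v k =
      ∑ q : Fin (k + 1) → V, if q 0 = v then survivalWeight G φ u (pad k q) k else 0 := by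
  simp only [survival, survivalWeight, ite_and, ite_not]

theorem survivalWeight_succ_eq_zero {φ : V → V → V} {u : V} {r : ℕ → V} (h : φ u (r 0) = r 0)
    (k : ℕ) : survivalWeight G φ u r (k + 1) = 0 :=
  if_pos ((capturedBy_positionalStrategy_succ φ u r k).2 (Or.inr (Or.inl h)))

theorem survivalWeight_succ {φ : V → V → V} {u v : V} (huv : u ≠ v) (hφ : φ u v ≠ v) {r : ℕ → V}
    (hr : r 0 = v) (k : ℕ) :
    survivalWeight G φ u r (k + 1) = (if G.Adj v (r 1) then (G.degree v : ℝ≥0∞)⁻¹ else 0) *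
      survivalWeight G φ (φ u v) (fun i => r (i + 1)) k := by
  subst hr
  simp only [survivalWeight, capturedBy_positionalStrategy_succ, huv.symm, hφ, false_or, mul_ite,
    mul_zero, pathWt]
  rw [Finset.prod_range_succ', mul_comm]

theorem survival_succ_eq_zero {φ : V → V → V} {u v : V} (h : φ u v = v) (k : ℕ) :
    survival G (positionalStrategy φ u) u v (k + 1) = 0 := by
  rw [survival_positionalStrategy, sum_ite_head_eq]
  exact Finset.sum_eq_zero fun q _ => survivalWeight_succ_eq_zero (by rwa [pad_cons_zero]) k

theorem survival_succ {φ : V → V → V} {u v : V} (huv : u ≠ v) (hφ : φ u v ≠ v) (k : ℕ) :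
    survival G (positionalStrategy φ u) u v (k + 1) = ∑ w ∈ G.neighborFinset v,
      (G.degree v : ℝ≥0∞)⁻¹ * survival G (positionalStrategy φ (φ u v)) (φ u v) w k := by
  have hweight : ∀ q : Fin (k + 1) → V,
      survivalWeight G φ u (pad (k + 1) (Fin.cons v q : Fin (k + 2) → V)) (k + 1) =
        ∑ w ∈ G.neighborFinset v,
          if q 0 = w then (G.degree v : ℝ≥0∞)⁻¹ * survivalWeight G φ (φ u v) (pad k q) k else 0 :=
    fun q => by
      have hone : pad (k + 1) (Fin.cons v q : Fin (k + 2) → V) 1 = q 0 :=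
        (pad_cons_succ v q 0).trans (by simp [pad])
      rw [survivalWeight_succ huv hφ (pad_cons_zero v q)]
      simp only [pad_cons_succ, hone]
      simp
  simp only [survival_positionalStrategy, Finset.mul_sum, mul_ite, mul_zero]
  rw [sum_ite_head_eq, Finset.sum_comm]
  exact Finset.sum_congr rfl fun q _ => hweight q

theorem ofReal_walkOperator {f : V → ℝ} (hf : 0 ≤ f) {v : V} (hv : 0 < G.degree v) :
    ENNReal.ofReal (walkOperator G f v) =
      ∑ w ∈ G.neighborFinset v, (G.degree v : ℝ≥0∞)⁻¹ * ENNReal.ofReal (f w) := by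
  rw [walkOperator_apply, ENNReal.ofReal_div_of_pos (by exact_mod_cast hv),
    ENNReal.ofReal_sum_of_nonneg fun w _ => hf w, ENNReal.ofReal_natCast, ENNReal.div_eq_inv_mul,
    Finset.mul_sum]

theorem sum_survival_le (hd : ∀ v, 0 < G.degree v) {φ : V → V → V} {g : V → V → ℝ} (hg : 0 ≤ g)
    (hφ : ∀ c r, c ≠ r → moveCost G g (φ c r) r ≤ g c r) (K : ℕ) (u v : V) :
    ∑ k ∈ Finset.range K, survival G (positionalStrategy φ u) u v k ≤ ENNReal.ofReal (g u v) := by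
  induction K generalizing u v with
  | zero => simp
  | succ K ih =>
    rcases eq_or_ne u v with rfl | huv
    · simp [survival_self]
    refine le_trans ?_ (ENNReal.ofReal_le_ofReal (hφ u v huv))
    rw [Finset.sum_range_succ', add_comm, moveCost]
    rcases eq_or_ne (φ u v) v with hcatch | hφv
    · simpa [survival_succ_eq_zero hcatch, hcatch] using survival_zero_le_one _ u v
    rw [if_neg hφv, ENNReal.ofReal_add zero_le_one (walkOperator_nonneg (hg _) v),
      ENNReal.ofReal_one, ofReal_walkOperator (hg _) (hd v)]
    simp only [survival_succ huv hφv]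
    rw [Finset.sum_comm]
    simp only [← Finset.mul_sum]
    gcongr with w
    · exact survival_zero_le_one _ u v
    · exact ih (φ u v) w

theorem expCaptureTime_positionalStrategy_le (hd : ∀ v, 0 < G.degree v) {φ : V → V → V}
    {g : V → V → ℝ} (hg : 0 ≤ g) (hφ : ∀ c r, c ≠ r → moveCost G g (φ c r) r ≤ g c r) (u v : V) :
    expCaptureTime G (positionalStrategy φ u) u v ≤ ENNReal.ofReal (g u v) :=
  ENNReal.tsum_le_of_sum_range_le fun K => sum_survival_le hd hg hφ K u v

end Survival

end CopDrunk

/-- **Main theorem.** The cop can capture the drunk robber in expected time `n + o(n)`,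
uniformly over all connected `n`-vertex graphs and starting positions: for every `ε > 0`
there is an `N` such that on every connected simple graph on `n ≥ N` vertices, for all
starting vertices `u` (cop) and `v` (robber), some valid cop strategy has expected capture
time at most `(1 + ε)·n`. -/
theorem cop_catches_drunk_in_n_plus_little_o (ε : ℝ) (hε : 0 < ε) :
    ∃ N : ℕ, ∀ n : ℕ, N ≤ n → ∀ (V : Type) [Fintype V], ∀ G : SimpleGraph V,
      Fintype.card V = n → G.Connected → ∀ u v : V,
        ∃ σ : List V → V, ValidStrategy G σ u ∧
          expCaptureTime G σ u v ≤ ENNReal.ofReal ((1 + ε) * n) := by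
  obtain ⟨N, hN⟩ := Filter.eventually_atTop.1
    ((CopDrunk.eventually_horizonValue_le hε).and (Filter.eventually_ge_atTop 2))
  refine ⟨N, fun n hn V _ G hcard hG u v => ?_⟩
  obtain ⟨hvalue, hn2⟩ := hN n hn
  have : Nontrivial V := Fintype.one_lt_card_iff_nontrivial.1 (by omega)
  have hd : ∀ v, 0 < G.degree v := fun v => hG.preconnected.degree_pos_of_nontrivial v
  obtain ⟨g, φ, hg, hgn, hadj, hφ⟩ :=
    CopDrunk.exists_policy_moveCost_le hd (hvalue V G hcard hG hd)
  exact ⟨CopDrunk.positionalStrategy φ u, CopDrunk.validStrategy_positionalStrategy hadj u,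
    (CopDrunk.expCaptureTime_positionalStrategy_le hd hg hφ u v).trans
      (ENNReal.ofReal_le_ofReal (hgn u v))⟩
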